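/- Let x be an eigenvector of Q(U) for the least eigenvalue, where U is the unicyclic graph obtained from an odd cycle C_g with vertices v₁,…,v_g (labeled cyclically) by attaching a path at v_g ending in a star. Then x(v_i) = x(v_{g−i}) for i = 1, …, (g−1)/2. -/

import Mathlib

open SimpleGraph Matrix

open Classical in
/-- The signless Laplacian matrix `Q(G) = D(G) + A(G)` of a simple graph. -/
noncomputable def signlessLaplacian {V : Type*} [Fintype V] (G : SimpleGraph V) : Matrix V V ℝ :=
  G.degMatrix ℝ + G.adjMatrix ℝ

open Classical in
/-- The least eigenvalue of the signless Laplacian. -/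
noncomputable def qmin {V : Type*} [Fintype V] (G : SimpleGraph V) : ℝ :=
  sInf (spectrum ℝ (signlessLaplacian G))

/-- The unicyclic graph `U_n^k(g)` on `Fin n`: an odd cycle on vertices `0, …, g-1`
(vertex `i-1` playing the role of `vᵢ`), a pendant path `g-1, g, …, n-k-1` attached at
`v_g = g-1`, and a star with center `n-k-1` and leaves `n-k, …, n-1`. -/
def Ugraph (n k g : ℕ) : SimpleGraph (Fin n) :=
  SimpleGraph.fromRel (fun a b =>
    (b.1 = a.1 + 1 ∧ a.1 + 2 ≤ n - k) ∨ (a.1 = 0 ∧ b.1 = g - 1) ∨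
      (a.1 = n - k - 1 ∧ n - k ≤ b.1))

open Classical in
theorem aux_mulVec {V : Type*} [Fintype V] (G : SimpleGraph V) (x : V → ℝ) (i : V) :
    (signlessLaplacian G).mulVec x i = ∑ j, if G.Adj i j then x i + x j else 0 := by
  unfold signlessLaplacian
  rw [Matrix.add_mulVec, Pi.add_apply, SimpleGraph.degMatrix, Matrix.mulVec_diagonal,
    SimpleGraph.adjMatrix_mulVec_apply, ← SimpleGraph.card_neighborFinset_eq_degree,
    ← Finset.sum_filter, Finset.sum_add_distrib, Finset.sum_const, nsmul_eq_mul]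
  rw [SimpleGraph.neighborFinset_eq_filter]

open Classical in
theorem aux_form {V : Type*} [Fintype V] (G : SimpleGraph V) (x : V → ℝ) :
    2 * (x ⬝ᵥ (signlessLaplacian G).mulVec x)
      = ∑ i, ∑ j, if G.Adj i j then (x i + x j) ^ 2 else 0 := by
  have h1 : x ⬝ᵥ (signlessLaplacian G).mulVec x
      = ∑ i, ∑ j, if G.Adj i j then x i * (x i + x j) else 0 := by
    simp only [dotProduct, aux_mulVec, Finset.mul_sum, mul_ite, mul_zero]
  have h2 : x ⬝ᵥ (signlessLaplacian G).mulVec x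
      = ∑ i, ∑ j, if G.Adj i j then x j * (x i + x j) else 0 := by
    rw [h1, Finset.sum_comm]
    refine Finset.sum_congr rfl fun i _ => Finset.sum_congr rfl fun j _ => ?_
    simp only [G.adj_comm j i, add_comm (x j)]
  rw [two_mul]
  nth_rewrite 1 [h1]
  rw [h2, ← Finset.sum_add_distrib]
  refine Finset.sum_congr rfl fun i _ => ?_
  rw [← Finset.sum_add_distrib]
  refine Finset.sum_congr rfl fun j _ => ?_
  split_ifs <;> ring

theorem aux_rayleigh {V : Type*} [Fintype V] (G : SimpleGraph V) (w : V → ℝ) :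
    qmin G * (w ⬝ᵥ w) ≤ w ⬝ᵥ (signlessLaplacian G).mulVec w := by
  classical
  have hH : (signlessLaplacian G).IsHermitian := by
    unfold signlessLaplacian
    ext i j
    simp [SimpleGraph.degMatrix, Matrix.diagonal_apply, SimpleGraph.adj_comm, eq_comm]
    split_ifs with h
    · rw [h]
    · rfl
  have hP : (signlessLaplacian G - qmin G • (1 : Matrix V V ℝ)).PosSemidef := by
    rw [Matrix.posSemidef_iff_isHermitian_and_spectrum_nonneg]
    refine ⟨hH.sub ?_, ?_⟩
    · ext i j
      simp [Matrix.one_apply, eq_comm]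
    · intro a ha
      have h2 : a + qmin G ∈ spectrum ℝ (signlessLaplacian G) := by
        rw [← Algebra.algebraMap_eq_smul_one, ← spectrum.sub_singleton_eq] at ha
        obtain ⟨b, hb, c, hc, rfl⟩ := ha
        rw [Set.mem_singleton_iff] at hc
        subst hc
        simpa using hb
      have h3 : qmin G ≤ a + qmin G := csInf_le (Matrix.finite_real_spectrum).bddBelow (by convert h2)
      simpa using h3
  have := hP.dotProduct_mulVec_nonneg w
  simp [Matrix.sub_mulVec, dotProduct_sub, Matrix.smul_mulVec] at this
  linarith

theorem aux_adj (n k g : ℕ) (a b : Fin n) : (Ugraph n k g).Adj a b ↔ a.1 ≠ b.1 ∧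
    (((b.1 = a.1 + 1 ∧ a.1 + 2 ≤ n - k) ∨ (a.1 = 0 ∧ b.1 = g - 1) ∨
      (a.1 = n - k - 1 ∧ n - k ≤ b.1)) ∨ ((a.1 = b.1 + 1 ∧ b.1 + 2 ≤ n - k) ∨
      (b.1 = 0 ∧ a.1 = g - 1) ∨ (b.1 = n - k - 1 ∧ n - k ≤ a.1))) := by
  simp [Ugraph, SimpleGraph.fromRel_adj, Fin.ext_iff]

/-- reflection of the cycle -/
def reflP (n g : ℕ) (hgn : g < n) : Equiv.Perm (Fin n) where
  toFun i := if h : i.1 < g - 1 then ⟨g - 2 - i.1, by omega⟩ else i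
  invFun i := if h : i.1 < g - 1 then ⟨g - 2 - i.1, by omega⟩ else i
  left_inv i := by
    ext; dsimp only
    split_ifs <;> dsimp only at * <;> omega
  right_inv i := by
    ext; dsimp only
    split_ifs <;> dsimp only at * <;> omega

theorem reflP_val (n g : ℕ) (hgn : g < n) (i : Fin n) :
    (reflP n g hgn i).1 = if i.1 < g - 1 then g - 2 - i.1 else i.1 := by
  simp only [reflP, Equiv.coe_fn_mk]
  split_ifs <;> rfl

/-- rotation of the cycle by `s` -/
def rotP (n g s : ℕ) (hgn : g < n) (hs : s ≤ g) : Equiv.Perm (Fin n) where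
  toFun i := ⟨if i.1 < g then (if i.1 + s < g then i.1 + s else i.1 + s - g) else i.1, by
    have := i.2
    split_ifs <;> omega⟩
  invFun i := ⟨if i.1 < g then (if s ≤ i.1 then i.1 - s else i.1 + g - s) else i.1, by
    have := i.2
    split_ifs <;> omega⟩
  left_inv i := by
    ext; dsimp only
    split_ifs <;> omega
  right_inv i := by
    ext; dsimp only
    split_ifs <;> omega

theorem rotP_val (n g s : ℕ) (hgn : g < n) (hs : s ≤ g) (i : Fin n) :
    (rotP n g s hgn hs i).1 =
      if i.1 < g then (if i.1 + s < g then i.1 + s else i.1 + s - g) else i.1 := rfl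

theorem refl_adj (n k g : ℕ) (hg3 : 3 ≤ g) (hgn : g < n) (hk : 1 ≤ k) (hkg : g + k ≤ n)
    (a b : Fin n) :
    (Ugraph n k g).Adj (reflP n g hgn a) (reflP n g hgn b) ↔ (Ugraph n k g).Adj a b := by
  simp only [aux_adj, reflP_val]
  have := a.2
  have := b.2
  split_ifs <;> omega

theorem cyc_adj (n k g : ℕ) (hg3 : 3 ≤ g) (hgn : g < n) (hk : 1 ≤ k) (hkg : g + k ≤ n)
    (a b : Fin n) : ((a.1 < g ∧ b.1 < g) ∧ (Ugraph n k g).Adj a b) ↔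
     (a.1 < g ∧ b.1 < g) ∧ (a.1 + 1 = b.1 ∨ b.1 + 1 = a.1 ∨ (a.1 = 0 ∧ b.1 + 1 = g) ∨
       (b.1 = 0 ∧ a.1 + 1 = g)) := by
  simp only [aux_adj]
  omega

theorem rot_adj (n k g s : ℕ) (hs : s ≤ g) (hg3 : 3 ≤ g) (hgn : g < n) (hk : 1 ≤ k)
    (hkg : g + k ≤ n) (a b : Fin n) :
    (((rotP n g s hgn hs a).1 < g ∧ (rotP n g s hgn hs b).1 < g) ∧
      (Ugraph n k g).Adj (rotP n g s hgn hs a) (rotP n g s hgn hs b)) ↔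
    ((a.1 < g ∧ b.1 < g) ∧ (Ugraph n k g).Adj a b) := by
  rw [cyc_adj n k g hg3 hgn hk hkg, cyc_adj n k g hg3 hgn hk hkg]
  simp only [rotP_val]
  split_ifs <;> omega

theorem tree_adj (n k g : ℕ) (hg3 : 3 ≤ g) (hgn : g < n) (hk : 1 ≤ k) (hkg : g + k ≤ n)
    (a b : Fin n) (h : (Ugraph n k g).Adj a b) (hn : ¬ (a.1 < g ∧ b.1 < g)) :
    g - 1 ≤ a.1 ∧ g - 1 ≤ b.1 ∧ (min b.1 (n - k) = min a.1 (n - k) + 1 ∨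
      min a.1 (n - k) = min b.1 (n - k) + 1) := by
  rw [aux_adj] at h
  omega

open Classical in
theorem form_cyc (n k g : ℕ) (u : Fin n → ℝ)
    (hu : ∀ a b, (Ugraph n k g).Adj a b → ¬ (a.1 < g ∧ b.1 < g) → u a + u b = 0) :
    2 * (u ⬝ᵥ (signlessLaplacian (Ugraph n k g)).mulVec u)
      = ∑ i, ∑ j, if (i.1 < g ∧ j.1 < g) ∧ (Ugraph n k g).Adj i j then (u i + u j) ^ 2 else 0 := by
  rw [aux_form]
  refine Finset.sum_congr rfl fun i _ => Finset.sum_congr rfl fun j _ => ?_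
  by_cases h : (Ugraph n k g).Adj i j
  · by_cases h' : i.1 < g ∧ j.1 < g
    · simp [h, h']
    · simp [h, h', hu i j h h']
  · simp [h]

/-- An eigenvector for `qmin` vanishing off the open cycle path is zero. -/
theorem vanish (n k g : ℕ) (hg3 : 3 ≤ g) (hgn : g < n) (hk : 1 ≤ k) (hkg : g + k ≤ n)
    (y : Fin n → ℝ) (hy0 : ∀ i : Fin n, g - 1 ≤ i.1 → y i = 0)
    (hy : (signlessLaplacian (Ugraph n k g)).mulVec y = qmin (Ugraph n k g) • y) :
    y = 0 := by
  classical
  by_contra hne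
  obtain ⟨j, hj⟩ : ∃ j, y j ≠ 0 := by
    by_contra! h
    exact hne (funext h)
  have hjg : j.1 < g - 1 := by
    by_contra h
    exact hj (hy0 j (by omega))
  have hs : j.1 + 1 ≤ g := by omega
  set ρ := rotP n g (j.1 + 1) hgn hs with hρ
  have hval := rotP_val n g (j.1 + 1) hgn hs
  let w : Fin n → ℝ := fun i =>
    if i.1 < g then y (ρ i) else (-1) ^ (min i.1 (n - k) + g + 1) * y j
  have hw1 : ∀ i : Fin n, i.1 < g → w i = y (ρ i) := fun i hi => by simp [w, hi]
  have hw2 : ∀ i : Fin n, g - 1 ≤ i.1 → w i = (-1) ^ (min i.1 (n - k) + g + 1) * y j := by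
    intro i hi
    by_cases h : i.1 < g
    · have h1 : ρ i = j := by
        ext
        rw [hρ, hval]
        split_ifs <;> omega
      have h2 : min i.1 (n - k) + g + 1 = 2 * g := by omega
      rw [hw1 i h, h1, h2, pow_mul]
      simp
    · simp [w, h]
  have hFy := form_cyc n k g y (by
    intro a b hab hn
    obtain ⟨h1, h2, -⟩ := tree_adj n k g hg3 hgn hk hkg a b hab hn
    rw [hy0 a h1, hy0 b h2, add_zero])
  have hFw := form_cyc n k g w (by
    intro a b hab hn
    obtain ⟨h1, h2, h3⟩ := tree_adj n k g hg3 hgn hk hkg a b hab hn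
    rw [hw2 a h1, hw2 b h2]
    rcases h3 with h3 | h3 <;> rw [h3] <;> ring)
  have hEq : w ⬝ᵥ (signlessLaplacian (Ugraph n k g)).mulVec w
      = y ⬝ᵥ (signlessLaplacian (Ugraph n k g)).mulVec y := by
    have : 2 * (w ⬝ᵥ (signlessLaplacian (Ugraph n k g)).mulVec w)
      = 2 * (y ⬝ᵥ (signlessLaplacian (Ugraph n k g)).mulVec y) := by
      rw [hFw, hFy]
      symm
      rw [← Equiv.sum_comp ρ]
      refine Finset.sum_congr rfl fun a _ => ?_
      rw [← Equiv.sum_comp ρ]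
      refine Finset.sum_congr rfl fun b _ => ?_
      have hr := rot_adj n k g (j.1 + 1) hs hg3 hgn hk hkg a b
      rw [← hρ] at hr
      simp only [hr]
      by_cases h : (a.1 < g ∧ b.1 < g) ∧ (Ugraph n k g).Adj a b
      · rw [if_pos h, if_pos h, hw1 a h.1.1, hw1 b h.1.2]
      · rw [if_neg h, if_neg h]
    linarith
  have hnorm : y ⬝ᵥ y < w ⬝ᵥ w := by
    have h1 : y ⬝ᵥ y = ∑ i, y (ρ i) * y (ρ i) := by
      rw [dotProduct, ← Equiv.sum_comp ρ]
    rw [h1, dotProduct]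
    have hge : ∀ i : Fin n, g ≤ i.1 → y (ρ i) = 0 := by
      intro i hi
      apply hy0
      rw [hρ, hval, if_neg (by omega)]
      omega
    apply Finset.sum_lt_sum
    · intro i _
      by_cases h : i.1 < g
      · rw [hw1 i h]
      · rw [hge i (by omega)]
        simpa using mul_self_nonneg (w i)
    · refine ⟨⟨g, hgn⟩, Finset.mem_univ _, ?_⟩
      rw [hge _ le_rfl, hw2 _ (by simp)]
      simp only [mul_zero]
      apply mul_self_pos.2
      exact mul_ne_zero (pow_ne_zero _ (by norm_num)) hj
  have hR := aux_rayleigh (Ugraph n k g) w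
  have hyy : y ⬝ᵥ (signlessLaplacian (Ugraph n k g)).mulVec y
      = qmin (Ugraph n k g) * (y ⬝ᵥ y) := by
    rw [hy, dotProduct_smul, smul_eq_mul]
  have hq : qmin (Ugraph n k g) ≤ 0 := by
    rw [hEq, hyy] at hR
    by_contra h
    push Not at h
    have := mul_lt_mul_of_pos_left hnorm h
    linarith
  have hpos : 0 ≤ y ⬝ᵥ y := Finset.sum_nonneg fun i _ => mul_self_nonneg _
  have hle : 2 * (y ⬝ᵥ (signlessLaplacian (Ugraph n k g)).mulVec y) ≤ 0 := by
    rw [hyy]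
    have := mul_nonpos_of_nonpos_of_nonneg hq hpos
    linarith
  rw [aux_form] at hle
  have hnn : ∀ a b : Fin n, 0 ≤ (if (Ugraph n k g).Adj a b then (y a + y b) ^ 2 else 0) := by
    intro a b
    split_ifs
    · positivity
    · exact le_rfl
  have hz : ∀ a b : Fin n, (Ugraph n k g).Adj a b → y a + y b = 0 := by
    intro a b hab
    have h0 := le_antisymm hle
      (Finset.sum_nonneg fun a _ => Finset.sum_nonneg fun b _ => hnn a b)
    have h1 := (Finset.sum_eq_zero_iff_of_nonneg
      (fun a _ => Finset.sum_nonneg fun b _ => hnn a b)).1 h0 a (Finset.mem_univ _)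
    have h2 := (Finset.sum_eq_zero_iff_of_nonneg (fun b _ => hnn a b)).1 h1 b (Finset.mem_univ _)
    rw [if_pos hab] at h2
    exact pow_eq_zero_iff (two_ne_zero) |>.1 h2
  have hall : ∀ m (h : m < g), y ⟨g - 1 - m, by omega⟩ = 0 := by
    intro m
    induction m with
    | zero => intro h; exact hy0 _ (by simp)
    | succ m ih =>
      intro h
      have h1 := hz ⟨g - 1 - (m + 1), by omega⟩ ⟨g - 1 - m, by omega⟩ (by
        rw [aux_adj]; dsimp only; omega)
      rw [ih (by omega), add_zero] at h1
      exact h1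
  apply hj
  have := hall (g - 1 - j.1) (by omega)
  convert this using 2
  ext
  dsimp only
  omega

theorem first_eigenvector_symmetry (n k g : ℕ) (hg3 : 3 ≤ g) (hodd : Odd g)
    (hgn : g < n) (hk : 1 ≤ k) (hkg : g + k ≤ n)
    (x : Fin n → ℝ) (hx0 : x ≠ 0)
    (hx : (signlessLaplacian (Ugraph n k g)).mulVec x = qmin (Ugraph n k g) • x)
    (i : ℕ) (hi1 : 1 ≤ i) (hi2 : i ≤ (g - 1) / 2) :
    x ⟨i - 1, by omega⟩ = x ⟨g - i - 1, by omega⟩ := by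
  classical
  have hc : (signlessLaplacian (Ugraph n k g)).mulVec (x ∘ reflP n g hgn)
      = qmin (Ugraph n k g) • (x ∘ reflP n g hgn) := by
    ext a
    have h := congrFun hx (reflP n g hgn a)
    rw [aux_mulVec, ← Equiv.sum_comp (reflP n g hgn)] at h
    simp only [refl_adj n k g hg3 hgn hk hkg] at h
    rw [aux_mulVec]
    exact h
  have hv := vanish n k g hg3 hgn hk hkg (x - x ∘ reflP n g hgn) (by
    intro a ha
    have : reflP n g hgn a = a := by
      ext
      rw [reflP_val, if_neg (by omega)]
    simp [this]) (by rw [Matrix.mulVec_sub, hx, hc, smul_sub])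
  have h := congrFun hv ⟨i - 1, by omega⟩
  have h2 : reflP n g hgn ⟨i - 1, by omega⟩ = ⟨g - i - 1, by omega⟩ := by
    ext
    rw [reflP_val]
    dsimp only
    rw [if_pos (by omega)]
    omega
  simp only [Pi.sub_apply, Function.comp_apply, Pi.zero_apply, h2] at h
  linarith
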